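/- Let R be a polynomial ring over an algebraically closed field K. Let I be an ideal generated by quadrics, contained in the linear prime ideal (x, y) with x, y linearly independent linear forms, and represented by minors by a 1-generic matrix D whose first column is (x, y)^T. Let a be a linear form that is not in the K-linear span of the entries of D. Then (ay) + I = ((y) + I) ∩ ((a) + I₂(D)). -/

import Mathlib

open MvPolynomial Filter

universe u

/-- `PdLE R n M` means the `R`-module `M` has projective dimension at most `n`:
either `M` is projective (`n = 0`), or `M` is a quotient of a free module by a
submodule of projective dimension at most `n - 1`. -/
def PdLE (R : Type u) [CommRing R] : ℕ → (M : Type u) → [AddCommGroup M] → [Module R M] → Prop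
  | 0, M, _, _ => Module.Projective R M
  | n + 1, M, _, _ => ∃ (F : Type u) (_ : AddCommGroup F) (_ : Module R F),
      Module.Free R F ∧ ∃ f : F →ₗ[R] M, Function.Surjective f ∧ PdLE R n (LinearMap.ker f)

/-- The projective dimension of an `R`-module `M`, as an element of `ℕ∞`
(`⊤` if `M` has no finite free resolution). -/
noncomputable def projDim (R : Type u) [CommRing R] (M : Type u) [AddCommGroup M]
    [Module R M] : ℕ∞ :=
  sInf ((fun n : ℕ => (n : ℕ∞)) '' {n : ℕ | PdLE R n M})

/-- The height of an ideal: the infimum of the heights of the prime ideals containing it. -/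
noncomputable def idealHeight {R : Type*} [CommRing R] (I : Ideal R) : ℕ∞ :=
  ⨅ p ∈ {p : PrimeSpectrum R | I ≤ p.asIdeal}, Order.height p

/-- The length of a module, defined as the Krull dimension of its lattice of submodules. -/
noncomputable def moduleLength (R : Type u) [CommRing R] (M : Type u) [AddCommGroup M]
    [Module R M] : WithBot ℕ∞ :=
  Order.krullDim (Submodule R M)

/-- `IsHSMultiplicity R mx I e` asserts that the Hilbert–Samuel multiplicity of `R/I`
with respect to the ideal `mx` equals `e`: for `d = dim R/I` there is a polynomial `P`
of degree `d` with `e = d! · (leading coefficient of P)` such that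
`length (R/(I + mx^n)) = P(n)` for all large `n`. -/
def IsHSMultiplicity (R : Type u) [CommRing R] (mx I : Ideal R) (e : ℕ) : Prop :=
  ∃ (d : ℕ) (P : Polynomial ℚ),
    ringKrullDim (R ⧸ I) = (d : WithBot ℕ∞) ∧
    P.natDegree = d ∧
    (e : ℚ) = P.leadingCoeff * d.factorial ∧
    ∀ᶠ n : ℕ in Filter.atTop, ∃ k : ℕ, (k : ℚ) = P.eval (n : ℚ) ∧
      moduleLength R (R ⧸ (I ⊔ mx ^ n)) = ((k : ℕ∞) : WithBot ℕ∞)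

/-- A matrix over a `K`-algebra is `1`-generic if it has no generalized zero entry:
for every nonzero vectors `u`, `v` of scalars, `uᵀ M v ≠ 0`. -/
def OneGeneric (K : Type*) [Field K] {R : Type u} [CommRing R] [Algebra K R]
    {m l : ℕ} (M : Matrix (Fin m) (Fin l) R) : Prop :=
  ∀ (u : Fin m → K) (v : Fin l → K), u ≠ 0 → v ≠ 0 →
    ∑ i, ∑ j, algebraMap K R (u i * v j) * M i j ≠ 0

/-- The ideal of all `2 × 2` minors of a `2 × l` matrix. -/
def minors2 {R : Type u} [CommRing R] {l : ℕ} (M : Matrix (Fin 2) (Fin l) R) : Ideal R :=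
  Ideal.span (Set.range fun p : Fin l × Fin l => M 0 p.1 * M 1 p.2 - M 0 p.2 * M 1 p.1)

/-- The homogeneous maximal ideal of a polynomial ring. -/
noncomputable def maxIdeal (K : Type*) [Field K] (σ : Type*) : Ideal (MvPolynomial σ K) :=
  Ideal.span (Set.range (X : σ → MvPolynomial σ K))

/-- The ideal represented by minors by the `2 × (n+1)` matrix with first column `(x, y)ᵀ`
and remaining columns `(u j, v j)ᵀ`: it is generated by the `2 × 2` minors involving
the first column. -/
def repByMinors {R : Type u} [CommRing R] {n : ℕ} (x y : R) (u v : Fin n → R) : Ideal R :=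
  Ideal.span (Set.range fun j : Fin n => x * v j - y * u j)

/-!
The ideal `J = (a) + I₂(D)` is prime. To see this, adjoin a variable `t` and consider the linear
forms over `K[t]` given by `a` and by the entries of `t * (row 0) + (row 1)`. As `D` is `1`-generic
and `a` lies outside the span of its entries, these forms stay linearly independent at every
`t = r`; since `K` is algebraically closed, their coefficient vectors span a direct summand over
`K[t]`, so they generate a prime ideal of `K[t][X₁, …, X_N]`. Its contraction to `K[X₁, …, X_N]` is
`J`: given an element of the contraction, the syzygies of row `0` modulo `a` are Koszul, which
allows one to lower the `t`-degree of the coefficients expressing it.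

The degree-one part of `J` is spanned by `a`, so `y` is not in `J`, hence is a nonzerodivisor modulo
`J`. Together with `y I₂(D) ⊆ I ⊆ I₂(D)` this gives the asserted equality of ideals.
-/

section LinearForms

variable {S : Type*} [CommRing S] {σ : Type*}

lemma isHomogeneous_one_iff_mem_span_X {p : MvPolynomial σ S} :
    p.IsHomogeneous 1 ↔ p ∈ Submodule.span S (Set.range X) := by
  rw [← homogeneousSubmodule_one_eq_span_X, mem_homogeneousSubmodule]

lemma isHomogeneous_of_mem_span {s : Set (MvPolynomial σ S)} {d : ℕ}
    (hs : ∀ p ∈ s, p.IsHomogeneous d) {p : MvPolynomial σ S} (hp : p ∈ Submodule.span S s) :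
    p.IsHomogeneous d :=
  (Submodule.span_le (p := homogeneousSubmodule σ S d)).2 hs hp

section

variable [Fintype σ]

variable (S σ) in
/-- The linear form in the variables `X i` with a given vector of coefficients. -/
noncomputable def linearForm : (σ → S) →ₗ[S] MvPolynomial σ S :=
  Fintype.linearCombination S X

lemma linearForm_single_one [DecidableEq σ] (i : σ) : linearForm S σ (Pi.single i 1) = X i := by
  simp [linearForm]

lemma exists_linearForm_eq {p : MvPolynomial σ S} (hp : p.IsHomogeneous 1) :
    ∃ c, linearForm S σ c = p :=
  (Submodule.mem_span_range_iff_exists_fun S).1 (isHomogeneous_one_iff_mem_span_X.1 hp)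

lemma map_linearForm {S' : Type*} [CommRing S'] (f : S →+* S') (c : σ → S) :
    map f (linearForm S σ c) = linearForm S' σ (f ∘ c) := by
  simp [linearForm, Fintype.linearCombination_apply, smul_eq_C_mul]

lemma span_linearForm_image_span (s : Set (σ → S)) :
    Ideal.span (linearForm S σ '' Submodule.span S s) = Ideal.span (linearForm S σ '' s) := by
  rw [← Submodule.map_coe, Submodule.map_span]
  exact Submodule.span_span_of_tower S (MvPolynomial σ S) _

section

variable [DecidableEq σ]

/-- The `S`-algebra endomorphism of `MvPolynomial σ S` extending an endomorphism of the module of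
linear forms, the latter being identified with its coefficient vectors. -/
noncomputable def linearSubst (P : (σ → S) →ₗ[S] (σ → S)) :
    MvPolynomial σ S →ₐ[S] MvPolynomial σ S :=
  aeval fun i => linearForm S σ (P (Pi.single i 1))

lemma linearSubst_linearForm (P : (σ → S) →ₗ[S] (σ → S)) (c : σ → S) :
    linearSubst P (linearForm S σ c) = linearForm S σ (P c) := by
  have h : (linearSubst P).toLinearMap ∘ₗ linearForm S σ = linearForm S σ ∘ₗ P := by
    refine LinearMap.pi_ext' fun i => LinearMap.ext_ring ?_
    simp [linearForm_single_one, linearSubst]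
  exact LinearMap.congr_fun h c

lemma ker_linearSubst {P : (σ → S) →ₗ[S] (σ → S)} (hP : IsIdempotentElem P) :
    RingHom.ker (linearSubst P) = Ideal.span (linearForm S σ '' LinearMap.ker P) := by
  set I := Ideal.span (linearForm S σ '' LinearMap.ker P)
  have hmk : (Ideal.Quotient.mkₐ S I).comp (linearSubst P) = Ideal.Quotient.mkₐ S I := by
    refine algHom_ext fun i => Ideal.Quotient.eq.2 ?_
    change linearSubst P (X i) - X i ∈ I
    rw [← linearForm_single_one, linearSubst_linearForm, ← map_sub]
    refine Ideal.subset_span ⟨_, ?_, rfl⟩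
    have hPP : P (P (Pi.single i 1)) = P (Pi.single i 1) := LinearMap.congr_fun hP _
    simp [hPP]
  apply le_antisymm
  · intro p hp
    have h := DFunLike.congr_fun hmk p
    rw [AlgHom.comp_apply, (RingHom.mem_ker).1 hp, map_zero] at h
    exact Ideal.Quotient.eq_zero_iff_mem.1 h.symm
  · rw [Ideal.span_le]
    rintro _ ⟨c, hc, rfl⟩
    rw [SetLike.mem_coe, RingHom.mem_ker, linearSubst_linearForm, LinearMap.mem_ker.1 hc, map_zero]

end

lemma exists_isIdempotentElem_ker_eq {M : Type*} [AddCommGroup M] [Module S M]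
    (W : Submodule S M) [Module.Projective S (M ⧸ W)] :
    ∃ P : M →ₗ[S] M, IsIdempotentElem P ∧ LinearMap.ker P = W := by
  obtain ⟨s, hs⟩ := Module.projective_lifting_property W.mkQ LinearMap.id W.mkQ_surjective
  have hker : LinearMap.ker s = ⊥ := LinearMap.ker_eq_bot_of_inverse hs
  refine ⟨s ∘ₗ W.mkQ, LinearMap.ext fun c => ?_, ?_⟩
  · exact congrArg s (LinearMap.congr_fun hs (W.mkQ c))
  · rw [LinearMap.ker_comp, hker, Submodule.comap_bot, Submodule.ker_mkQ]

lemma isPrime_span_linearForm_image [IsDomain S] (W : Submodule S (σ → S))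
    [Module.Projective S ((σ → S) ⧸ W)] : (Ideal.span (linearForm S σ '' W)).IsPrime := by
  classical
  obtain ⟨P, hP, rfl⟩ := exists_isIdempotentElem_ker_eq W
  rw [← ker_linearSubst hP]
  exact RingHom.ker_isPrime _

end

lemma isPrime_span_of_isHomogeneous_one [Finite σ] {K : Type*} [Field K]
    {s : Set (MvPolynomial σ K)} (hs : ∀ l ∈ s, l.IsHomogeneous 1) : (Ideal.span s).IsPrime := by
  have := Fintype.ofFinite σ
  have hpre : linearForm K σ '' (linearForm K σ ⁻¹' s) = s :=
    Set.image_preimage_eq_of_subset fun l hl => exists_linearForm_eq (hs l hl)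
  rw [← hpre, ← span_linearForm_image_span]
  exact isPrime_span_linearForm_image _

lemma isHomogeneous_one_mem_idealOfVars {p : MvPolynomial σ S} (hp : p.IsHomogeneous 1) :
    p ∈ idealOfVars σ S :=
  Submodule.span_subset_span S _ _ (isHomogeneous_one_iff_mem_span_X.1 hp)

lemma sub_C_constantCoeff_mem_idealOfVars (p : MvPolynomial σ S) :
    p - C (constantCoeff p) ∈ idealOfVars σ S := by
  rw [← pow_one (idealOfVars σ S), mem_pow_idealOfVars_iff']
  intro d hd
  obtain rfl : d = 0 := (Finsupp.degree_eq_zero_iff d).1 (Nat.lt_one_iff.1 hd)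
  simp [constantCoeff_eq]

lemma exists_sub_mem_sq_of_mem_ideal_span {s : Set (MvPolynomial σ S)}
    (hs : ∀ l ∈ s, l.IsHomogeneous 1) {p : MvPolynomial σ S} (hp : p ∈ Ideal.span s) :
    ∃ l ∈ Submodule.span S s, p - l ∈ idealOfVars σ S ^ 2 := by
  induction hp using Submodule.span_induction with
  | mem l hl => exact ⟨l, Submodule.subset_span hl, by simp⟩
  | zero => exact ⟨0, zero_mem _, by simp⟩
  | add p q _ _ hp hq =>
    obtain ⟨l, hl, hpl⟩ := hp
    obtain ⟨m, hm, hqm⟩ := hq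
    exact ⟨l + m, add_mem hl hm, by simpa only [add_sub_add_comm] using add_mem hpl hqm⟩
  | smul r p _ hp =>
    obtain ⟨l, hl, hpl⟩ := hp
    refine ⟨constantCoeff r • l, Submodule.smul_mem _ _ hl, ?_⟩
    have hrl : (r - C (constantCoeff r)) * l ∈ idealOfVars σ S ^ 2 := by
      rw [pow_two]
      exact Ideal.mul_mem_mul (sub_C_constantCoeff_mem_idealOfVars r)
        (isHomogeneous_one_mem_idealOfVars (isHomogeneous_of_mem_span hs hl))
    have hsplit : r • p - constantCoeff r • l =
        r * (p - l) + (r - C (constantCoeff r)) * l := by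
      rw [smul_eq_mul, smul_eq_C_mul]
      ring
    rw [hsplit]
    exact add_mem (Ideal.mul_mem_left _ _ hpl) hrl

lemma eq_zero_of_isHomogeneous_of_mem_pow_idealOfVars {p : MvPolynomial σ S} {d e : ℕ}
    (hp : p.IsHomogeneous d) (hde : d < e) (hpe : p ∈ idealOfVars σ S ^ e) : p = 0 := by
  ext m
  by_contra hm
  have hdeg : m.degree = d := by
    rw [Finsupp.degree_eq_weight_one]
    exact hp hm
  exact hm ((mem_pow_idealOfVars_iff' e p).1 hpe m (hdeg ▸ hde))

lemma mem_span_of_mem_ideal_span_sup_sq {s : Set (MvPolynomial σ S)}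
    (hs : ∀ l ∈ s, l.IsHomogeneous 1) {p : MvPolynomial σ S} (hp : p.IsHomogeneous 1)
    (h : p ∈ Ideal.span s ⊔ idealOfVars σ S ^ 2) : p ∈ Submodule.span S s := by
  obtain ⟨q, hq, r, hr, rfl⟩ := Submodule.mem_sup.1 h
  obtain ⟨l, hl, hql⟩ := exists_sub_mem_sq_of_mem_ideal_span hs hq
  have hmem : q + r - l ∈ idealOfVars σ S ^ 2 := by
    simpa only [add_sub_right_comm] using add_mem hql hr
  have hzero : q + r - l = 0 :=
    eq_zero_of_isHomogeneous_of_mem_pow_idealOfVars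
      ((homogeneousSubmodule σ S 1).sub_mem hp (isHomogeneous_of_mem_span hs hl)) one_lt_two hmem
  rwa [sub_eq_zero.1 hzero]

end LinearForms

section TorsionFree

lemma isTorsionFree_of_forall_prime {S M : Type*} [CommRing S] [IsDomain S]
    [UniqueFactorizationMonoid S] [AddCommGroup M] [Module S M]
    (h : ∀ p : S, Prime p → ∀ m : M, p • m = 0 → m = 0) : Module.IsTorsionFree S M := by
  refine .of_smul_eq_zero fun s => ?_
  induction s using UniqueFactorizationMonoid.induction_on_prime with
  | h₁ => exact fun _ _ => .inl rfl
  | h₂ s hs => exact fun m hm => .inr (hs.smul_eq_zero.1 hm)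
  | h₃ s p hs hp ih =>
    intro m hm
    rw [mul_smul] at hm
    exact .inr ((ih m (h p hp _ hm)).resolve_left hs)

lemma exists_associated_X_sub_C {K : Type*} [Field K] [IsAlgClosed K] {p : Polynomial K}
    (hp : Prime p) : ∃ r, Associated p (Polynomial.X - Polynomial.C r) := by
  obtain ⟨r, hr⟩ := IsAlgClosed.exists_root p fun h =>
    hp.not_isUnit (Polynomial.isUnit_iff_degree_eq_zero.2 h)
  exact ⟨r, ((Polynomial.irreducible_X_sub_C r).associated_of_dvd hp.irreducible
    (Polynomial.dvd_iff_isRoot.2 hr)).symm⟩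

variable {σ ι : Type*} [Finite ι]

lemma mem_span_range_of_X_sub_C_smul_mem {K : Type*} [CommRing K] [IsDomain K]
    {w : ι → σ → Polynomial K} {r : K}
    (hw : LinearIndependent K fun j i => (w j i).eval r) {c : σ → Polynomial K}
    (hc : (Polynomial.X - Polynomial.C r) • c ∈
      Submodule.span (Polynomial K) (Set.range w)) :
    c ∈ Submodule.span (Polynomial K) (Set.range w) := by
  have := Fintype.ofFinite ι
  obtain ⟨g, hg⟩ := (Submodule.mem_span_range_iff_exists_fun _).1 hc
  have hroot : ∀ j, (g j).IsRoot r := by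
    refine Fintype.linearIndependent_iff.1 hw (fun j => (g j).eval r) (funext fun i => ?_)
    simpa [Polynomial.eval_finsetSum] using congrArg (Polynomial.eval r) (congrFun hg i)
  choose h hh using fun j => Polynomial.dvd_iff_isRoot.2 (hroot j)
  have hcancel : (Polynomial.X - Polynomial.C r) • ∑ j, h j • w j =
      (Polynomial.X - Polynomial.C r) • c := by
    simp_rw [← hg, Finset.smul_sum, smul_smul, ← hh]
  exact (Submodule.mem_span_range_iff_exists_fun _).2
    ⟨h, smul_right_injective _ (Polynomial.X_sub_C_ne_zero r) hcancel⟩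

lemma isTorsionFree_quotient_span_range {K : Type*} [Field K] [IsAlgClosed K]
    {w : ι → σ → Polynomial K} (hw : ∀ r, LinearIndependent K fun j i => (w j i).eval r) :
    Module.IsTorsionFree (Polynomial K)
      ((σ → Polynomial K) ⧸ Submodule.span (Polynomial K) (Set.range w)) := by
  refine isTorsionFree_of_forall_prime fun p hp m hm => ?_
  obtain ⟨c, rfl⟩ := Submodule.mkQ_surjective _ m
  obtain ⟨r, u, hu⟩ := exists_associated_X_sub_C hp
  rw [← map_smul, Submodule.mkQ_apply, Submodule.Quotient.mk_eq_zero] at hm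
  rw [Submodule.mkQ_apply, Submodule.Quotient.mk_eq_zero]
  refine mem_span_range_of_X_sub_C_smul_mem (hw r) ?_
  rw [← hu, mul_comm, mul_smul]
  exact Submodule.smul_mem _ _ hm

end TorsionFree

section Koszul

open Matrix

variable {Q : Type*} [CommRing Q] {ι : Type*} [Fintype ι]

/-- The syzygies of the family `A` are generated by the Koszul ones `A i • e j - A j • e i`.
Their combinations are exactly the vectors `(W - Wᵀ) *ᵥ A`, `W` being the matrix of coefficients. -/
def HasKoszulSyzygies (A : ι → Q) : Prop :=
  ∀ g : ι → Q, A ⬝ᵥ g = 0 → ∃ W : Matrix ι ι Q, g = (W - Wᵀ) *ᵥ A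

lemma dotProduct_sub_transpose_mulVec_self (W : Matrix ι ι Q) (A : ι → Q) :
    A ⬝ᵥ (W - Wᵀ) *ᵥ A = 0 := by
  rw [sub_mulVec, dotProduct_sub, dotProduct_transpose_mulVec, sub_self]

lemma exists_dotProduct_eq_of_mem_span_image {A : ι → Q} {s : Finset ι} {q : Q}
    (hq : q ∈ Ideal.span (A '' s)) : ∃ c : ι → Q, (∀ j ∉ s, c j = 0) ∧ c ⬝ᵥ A = q := by
  classical
  obtain ⟨c, hc⟩ : ∃ c : ι → Q, ∑ i ∈ s, c i * A i = q := by
    simpa only [smul_eq_mul] using (Submodule.mem_span_image_finset_iff_exists_fun' Q).1 hq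
  refine ⟨fun i => if i ∈ s then c i else 0, fun j hj => if_neg hj, ?_⟩
  simp [dotProduct, ite_mul, Finset.sum_ite_mem, hc]

lemma mul_mem_span_image_of_dotProduct_eq_zero {A g : ι → Q} (hg : A ⬝ᵥ g = 0)
    {s : Finset ι} {k : ι} (hgs : ∀ j ∉ s, j ≠ k → g j = 0) :
    A k * g k ∈ Ideal.span (A '' s) := by
  classical
  have hsum : A k * g k = -∑ j ∈ Finset.univ.erase k, A j * g j :=
    eq_neg_of_add_eq_zero_left
      ((Finset.add_sum_erase _ (fun j => A j * g j) (Finset.mem_univ k)).trans hg)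
  rw [hsum]
  refine neg_mem (Ideal.sum_mem _ fun j hj => ?_)
  by_cases hjs : j ∈ s
  · exact Ideal.mul_mem_right _ _ (Ideal.subset_span ⟨j, hjs, rfl⟩)
  · simp [hgs j hjs (Finset.ne_of_mem_erase hj)]

lemma hasKoszulSyzygies_of_regular {A : ι → Q}
    (hA : ∀ (s : Finset ι) (k : ι), k ∉ s → ∀ g, A k * g ∈ Ideal.span (A '' s) →
      g ∈ Ideal.span (A '' s)) : HasKoszulSyzygies A := by
  classical
  suffices h : ∀ (s : Finset ι) (g : ι → Q), (∀ j ∉ s, g j = 0) → A ⬝ᵥ g = 0 →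
      ∃ W : Matrix ι ι Q, g = (W - Wᵀ) *ᵥ A from
    fun g hg => h Finset.univ g (fun j hj => absurd (Finset.mem_univ j) hj) hg
  intro s
  induction s using Finset.induction_on with
  | empty => exact fun g hg _ => ⟨0, funext fun j => by simpa using hg j (Finset.notMem_empty j)⟩
  | insert k s hk ih =>
    intro g hgs hg
    have hgk : A k * g k ∈ Ideal.span (A '' s) :=
      mul_mem_span_image_of_dotProduct_eq_zero hg fun j hjs hjk => hgs j (by simp [hjs, hjk])
    obtain ⟨c, hcs, hc⟩ := exists_dotProduct_eq_of_mem_span_image (hA s k hk _ hgk)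
    let W₀ : Matrix ι ι Q := vecMulVec (Pi.single k 1) c
    have hW₀ : ∀ j, ((W₀ - W₀ᵀ) *ᵥ A) j = (Pi.single k (g k) : ι → Q) j - c j * A k := by
      intro j
      simp [W₀, sub_mulVec, transpose_vecMulVec, vecMulVec_mulVec, hc, Pi.single_apply, mul_comm]
    have hsupp : ∀ j ∉ s, (g - (W₀ - W₀ᵀ) *ᵥ A) j = 0 := by
      intro j hj
      rcases eq_or_ne j k with rfl | hjk
      · simp [hW₀, hcs, hj]
      · simp [hW₀, hcs, hj, hjk, hgs j (by simp [hj, hjk])]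
    obtain ⟨W, hW⟩ := ih (g - (W₀ - W₀ᵀ) *ᵥ A) hsupp
      (by rw [dotProduct_sub, hg, dotProduct_sub_transpose_mulVec_self, sub_zero])
    refine ⟨W + W₀, ?_⟩
    rw [transpose_add, add_sub_add_comm, add_mulVec, ← hW, sub_add_cancel]

end Koszul

lemma hasKoszulSyzygies_mk_of_linearIndependent {K σ κ ι : Type*} [Field K] [Finite σ] [Fintype ι]
    {a : κ → MvPolynomial σ K} {b : ι → MvPolynomial σ K} (ha : ∀ k, (a k).IsHomogeneous 1)
    (hb : ∀ j, (b j).IsHomogeneous 1) (hab : LinearIndependent K (Sum.elim a b)) :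
    HasKoszulSyzygies (Ideal.Quotient.mk (Ideal.span (Set.range a)) ∘ b) := by
  refine hasKoszulSyzygies_of_regular fun s k hk g hg => ?_
  obtain ⟨g, rfl⟩ := Ideal.Quotient.mk_surjective g
  have hlin : ∀ l ∈ b '' s ∪ Set.range a, l.IsHomogeneous 1 := by
    rintro _ (⟨j, -, rfl⟩ | ⟨j, rfl⟩)
    exacts [hb j, ha j]
  have hprime := isPrime_span_of_isHomogeneous_one hlin
  have hbk : b k ∉ Ideal.span (b '' s ∪ Set.range a) := by
    intro hmem
    have hspan := mem_span_of_mem_ideal_span_sup_sq hlin (hb k) (Ideal.mem_sup_left hmem)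
    refine hab.notMem_span_image (s := Sum.inr '' (s : Set ι) ∪ Set.range Sum.inl)
      (x := Sum.inr k) (by simpa using hk) ?_
    simpa [Set.image_union, Set.image_image, ← Set.range_comp, Function.comp_def] using hspan
  rw [Set.image_comp, ← Ideal.map_span] at hg ⊢
  rw [Function.comp_apply, ← map_mul, Ideal.mem_quotient_iff_mem_sup, ← Ideal.span_union] at hg
  rw [Ideal.mem_quotient_iff_mem_sup, ← Ideal.span_union]
  exact (hprime.mem_or_mem hg).resolve_left hbk

section Pencil

open Matrix

variable {Q : Type u} [CommRing Q] {l : ℕ}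

/-- The pencil `X * (row 0) + (row 1)` of the rows of a matrix with two rows. -/
noncomputable def pencil (M : Matrix (Fin 2) (Fin l) Q) (j : Fin l) : Polynomial Q :=
  Polynomial.X * Polynomial.C (M 0 j) + Polynomial.C (M 1 j)

lemma map_minors2 {Q' : Type*} [CommRing Q'] (f : Q →+* Q') (M : Matrix (Fin 2) (Fin l) Q) :
    (minors2 M).map f = minors2 (M.map f) := by
  simp [minors2, Ideal.map_span, ← Set.range_comp, Function.comp_def]

lemma map_span_pencil {Q' : Type*} [CommRing Q'] (f : Q →+* Q') (M : Matrix (Fin 2) (Fin l) Q) :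
    (Ideal.span (Set.range (pencil M))).map (Polynomial.mapRingHom f) =
      Ideal.span (Set.range (pencil (M.map f))) := by
  rw [Ideal.map_span, ← Set.range_comp]
  congr 2
  funext j
  simp [pencil]

lemma minors2_le_comap_C_span_pencil (M : Matrix (Fin 2) (Fin l) Q) :
    minors2 M ≤ (Ideal.span (Set.range (pencil M))).comap Polynomial.C := by
  rw [minors2, Ideal.span_le]
  rintro _ ⟨⟨i, j⟩, rfl⟩
  have hminor : Polynomial.C (M 0 i * M 1 j - M 0 j * M 1 i) =
      Polynomial.C (M 0 i) * pencil M j - Polynomial.C (M 0 j) * pencil M i := by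
    simp only [pencil, map_sub, map_mul]
    ring
  rw [SetLike.mem_coe, Ideal.mem_comap, hminor]
  exact sub_mem (Ideal.mul_mem_left _ _ (Ideal.subset_span ⟨j, rfl⟩))
    (Ideal.mul_mem_left _ _ (Ideal.subset_span ⟨i, rfl⟩))

lemma dotProduct_sub_transpose_mulVec_mem_minors2 (M : Matrix (Fin 2) (Fin l) Q)
    (W : Matrix (Fin l) (Fin l) Q) : M 1 ⬝ᵥ (W - Wᵀ) *ᵥ M 0 ∈ minors2 M := by
  have hexpand : M 1 ⬝ᵥ (W - Wᵀ) *ᵥ M 0 =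
      ∑ j, ∑ i, W j i * (M 0 i * M 1 j - M 0 j * M 1 i) := by
    rw [sub_mulVec, dotProduct_sub, dotProduct_transpose_mulVec]
    simp only [dotProduct, mulVec, Finset.mul_sum, ← Finset.sum_sub_distrib]
    exact Finset.sum_congr rfl fun j _ => Finset.sum_congr rfl fun i _ => by ring
  rw [hexpand]
  exact Ideal.sum_mem _ fun j _ => Ideal.sum_mem _ fun i _ =>
    Ideal.mul_mem_left _ _ (Ideal.subset_span ⟨(i, j), rfl⟩)

lemma map_C_mulVec_pencil (W : Matrix (Fin l) (Fin l) Q) (M : Matrix (Fin 2) (Fin l) Q)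
    (j : Fin l) : (W.map Polynomial.C *ᵥ pencil M) j =
      Polynomial.X * Polynomial.C ((W *ᵥ M 0) j) + Polynomial.C ((W *ᵥ M 1) j) := by
  simp only [mulVec, dotProduct, pencil, map_apply, map_sum, map_mul, Finset.mul_sum,
    ← Finset.sum_add_distrib]
  exact Finset.sum_congr rfl fun i _ => by ring

lemma coeff_succ_pencil_dotProduct (M : Matrix (Fin 2) (Fin l) Q) (g : Fin l → Polynomial Q)
    (e : ℕ) : (pencil M ⬝ᵥ g).coeff (e + 1) =
      (M 0 ⬝ᵥ fun j => (g j).coeff e) + M 1 ⬝ᵥ fun j => (g j).coeff (e + 1) := by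
  simp [pencil, dotProduct, Polynomial.finsetSum_coeff, add_mul, mul_assoc,
    Polynomial.coeff_X_mul, Finset.sum_add_distrib]

-- The leading coefficients of `g` form a syzygy of `M 0`; being Koszul, it lifts to a syzygy
-- of `pencil M`, whose subtraction from `g` lowers the degree.
lemma exists_C_pencil_dotProduct_eq {M : Matrix (Fin 2) (Fin l) Q}
    (hM : HasKoszulSyzygies (M 0)) {f : Q} (e : ℕ) (g : Fin l → Polynomial Q)
    (hg : ∀ j, (g j).natDegree ≤ e) (hf : pencil M ⬝ᵥ g = Polynomial.C f) :
    ∃ c : Fin l → Q, pencil M ⬝ᵥ (Polynomial.C ∘ c) = Polynomial.C f := by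
  induction e generalizing g with
  | zero =>
    refine ⟨fun j => (g j).coeff 0, ?_⟩
    rwa [← show g = Polynomial.C ∘ fun j => (g j).coeff 0 from
      funext fun j => Polynomial.eq_C_of_natDegree_le_zero (hg j)]
  | succ e ih =>
    have hlead : M 0 ⬝ᵥ (fun j => (g j).coeff (e + 1)) = 0 := by
      have hzero : (fun j => (g j).coeff (e + 2)) = 0 := funext fun j =>
        Polynomial.coeff_eq_zero_of_natDegree_lt ((hg j).trans_lt (Nat.lt_succ_self _))
      have hcoeff := coeff_succ_pencil_dotProduct M g (e + 1)
      rw [hf, Polynomial.coeff_C_succ, hzero, dotProduct_zero, add_zero] at hcoeff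
      exact hcoeff.symm
    obtain ⟨W, hW⟩ := hM _ hlead
    let V := W.map Polynomial.C
    have hV : V - Vᵀ = (W - Wᵀ).map Polynomial.C := by
      simp [V, Matrix.map_sub, transpose_map]
    refine ih (g - Polynomial.X (R := Q) ^ e • (V - Vᵀ) *ᵥ pencil M) (fun j => ?_) ?_
    · rw [hV, Pi.sub_apply, Pi.smul_apply, map_C_mulVec_pencil, ← congrFun hW j, smul_eq_mul]
      refine Polynomial.natDegree_le_pred (n := e + 1)
        ((Polynomial.natDegree_sub_le_of_le (n := e + 1) (hg j) (by compute_degree)).trans_eq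
          (max_self _)) ?_
      simp [mul_add, ← mul_assoc, Polynomial.coeff_X_pow]
    · rw [dotProduct_sub, dotProduct_smul, dotProduct_sub_transpose_mulVec_self, smul_zero,
        sub_zero, hf]

lemma comap_C_span_pencil {M : Matrix (Fin 2) (Fin l) Q} (hM : HasKoszulSyzygies (M 0)) :
    (Ideal.span (Set.range (pencil M))).comap Polynomial.C = minors2 M := by
  refine le_antisymm (fun f hf => ?_) (minors2_le_comap_C_span_pencil M)
  obtain ⟨g, hg⟩ := Ideal.mem_span_range_iff_exists_fun.1 (Ideal.mem_comap.1 hf)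
  obtain ⟨c, hc⟩ := exists_C_pencil_dotProduct_eq hM
    (Finset.univ.sup fun j => (g j).natDegree) g
    (fun j => Finset.le_sup (f := fun j => (g j).natDegree) (Finset.mem_univ j))
    ((dotProduct_comm _ _).trans hg)
  have hsyz : M 0 ⬝ᵥ c = 0 := by
    have hcoeff := coeff_succ_pencil_dotProduct M (Polynomial.C ∘ c) 0
    rw [hc] at hcoeff
    simpa [Polynomial.coeff_C_succ, dotProduct] using hcoeff.symm
  have hf : f = M 1 ⬝ᵥ c := by
    simpa [pencil, dotProduct, Polynomial.finsetSum_coeff] using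
      (congrArg (Polynomial.coeff · 0) hc).symm
  obtain ⟨W, rfl⟩ := hM c hsyz
  exact hf ▸ dotProduct_sub_transpose_mulVec_mem_minors2 M W

lemma comap_C_sup_span_pencil (I : Ideal Q) {M : Matrix (Fin 2) (Fin l) Q}
    (hM : HasKoszulSyzygies (Ideal.Quotient.mk I ∘ M 0)) :
    (I.map Polynomial.C ⊔ Ideal.span (Set.range (pencil M))).comap Polynomial.C =
      I ⊔ minors2 M := by
  apply le_antisymm
  · intro f hf
    have hmap := Ideal.mem_map_of_mem (Polynomial.mapRingHom (Ideal.Quotient.mk I))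
      (Ideal.mem_comap.1 hf)
    have hI : (I.map Polynomial.C).map (Polynomial.mapRingHom (Ideal.Quotient.mk I)) = ⊥ := by
      rw [Ideal.map_map, Polynomial.mapRingHom_comp_C, ← Ideal.map_map, Ideal.map_quotient_self,
        Ideal.map_bot]
    rw [Ideal.map_sup, hI, bot_sup_eq, map_span_pencil, Polynomial.coe_mapRingHom,
      Polynomial.map_C, ← Ideal.mem_comap,
      comap_C_span_pencil (M := M.map (Ideal.Quotient.mk I)) hM, ← map_minors2,
      Ideal.mem_quotient_iff_mem_sup, sup_comm] at hmap
    exact hmap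
  · exact sup_le (Ideal.le_comap_map.trans (Ideal.comap_mono le_sup_left))
      ((minors2_le_comap_C_span_pencil M).trans (Ideal.comap_mono le_sup_right))

end Pencil

section PolynomialSwap

variable {K : Type*} [CommRing K] {σ : Type*}

variable (K σ) in
/-- The isomorphism `K[t][σ] ≃ K[σ][t]` interchanging the variable `t` with the family `σ`. -/
noncomputable def polynomialSwap :
    MvPolynomial σ (Polynomial K) ≃ₐ[K] Polynomial (MvPolynomial σ K) :=
  (optionEquivRight K σ).symm.trans (optionEquivLeft K σ)

lemma polynomialSwap_C_X : polynomialSwap K σ (C Polynomial.X) = Polynomial.X := by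
  rw [polynomialSwap, AlgEquiv.trans_apply, ← optionEquivRight_X_none, AlgEquiv.symm_apply_apply,
    optionEquivLeft_X_none]

lemma polynomialSwap_map_C (p : MvPolynomial σ K) :
    polynomialSwap K σ (map Polynomial.C p) = Polynomial.C p := by
  have h : ((polynomialSwap K σ : _ →+* _).comp (map Polynomial.C)) =
      (Polynomial.C : MvPolynomial σ K →+* _) := by
    refine ringHom_ext (fun r => ?_) fun i => ?_
    · simpa using (polynomialSwap K σ).commutes r
    · change polynomialSwap K σ (map Polynomial.C (X i)) = Polynomial.C (X i)
      rw [map_X, polynomialSwap, AlgEquiv.trans_apply, ← optionEquivRight_X_some,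
        AlgEquiv.symm_apply_apply, optionEquivLeft_X_some]
  exact RingHom.congr_fun h p

variable {l : ℕ}

/-- The coefficient vectors of the entries of the pencil of a matrix of linear forms, the matrix
being given by the coefficient vectors `A i j` of its entries. -/
noncomputable def coeffPencil (A : Matrix (Fin 2) (Fin l) (σ → K)) (j : Fin l) :
    σ → Polynomial K :=
  (Polynomial.X : Polynomial K) • (Polynomial.C ∘ A 0 j) + Polynomial.C ∘ A 1 j

lemma eval_coeffPencil (A : Matrix (Fin 2) (Fin l) (σ → K)) (r : K) (j : Fin l) :
    (fun i => (coeffPencil A j i).eval r) = r • A 0 j + A 1 j := by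
  funext i
  simpa [coeffPencil] using mul_comm _ _

variable [Fintype σ]

lemma polynomialSwap_linearForm_C_comp (c : σ → K) :
    polynomialSwap K σ (linearForm (Polynomial K) σ (Polynomial.C ∘ c)) =
      Polynomial.C (linearForm K σ c) := by
  rw [← map_linearForm, polynomialSwap_map_C]

lemma polynomialSwap_linearForm_coeffPencil (A : Matrix (Fin 2) (Fin l) (σ → K)) (j : Fin l) :
    polynomialSwap K σ (linearForm (Polynomial K) σ (coeffPencil A j)) =
      pencil (A.map (linearForm K σ)) j := by
  rw [coeffPencil, map_add, map_smul, smul_eq_C_mul, map_add, map_mul, polynomialSwap_C_X,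
    polynomialSwap_linearForm_C_comp, polynomialSwap_linearForm_C_comp, pencil, Matrix.map_apply,
    Matrix.map_apply]

lemma map_polynomialSwap_span_linearForm {κ : Type*} (α : κ → σ → K)
    (A : Matrix (Fin 2) (Fin l) (σ → K)) :
    (Ideal.span (linearForm (Polynomial K) σ ''
        Set.range (Sum.elim (fun k => Polynomial.C ∘ α k) (coeffPencil A)))).map
          (polynomialSwap K σ) =
      (Ideal.span (Set.range fun k => linearForm K σ (α k))).map Polynomial.C ⊔
        Ideal.span (Set.range (pencil (A.map (linearForm K σ)))) := by
  have hα : polynomialSwap K σ ∘ linearForm (Polynomial K) σ ∘ (fun k => Polynomial.C ∘ α k) =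
      Polynomial.C ∘ fun k => linearForm K σ (α k) :=
    funext fun k => by simp only [Function.comp_apply, polynomialSwap_linearForm_C_comp]
  have hA : polynomialSwap K σ ∘ linearForm (Polynomial K) σ ∘ coeffPencil A =
      pencil (A.map (linearForm K σ)) :=
    funext fun j => by simp only [Function.comp_apply, polynomialSwap_linearForm_coeffPencil]
  rw [Set.Sum.elim_range, Set.image_union, Ideal.span_union, Ideal.map_sup, Ideal.map_span,
    Ideal.map_span, Ideal.map_span, ← Set.range_comp, ← Set.range_comp, ← Set.range_comp,
    ← Set.range_comp, ← Set.range_comp, hα, hA]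

end PolynomialSwap

lemma OneGeneric.linearIndependent {K : Type*} [Field K] {R : Type u} [CommRing R] [Algebra K R]
    {m l : ℕ} {M : Matrix (Fin m) (Fin l) R} (hM : OneGeneric K M) {c : Fin m → K} (hc : c ≠ 0) :
    LinearIndependent K fun j => ∑ i, c i • M i j := by
  rw [Fintype.linearIndependent_iff]
  intro v hv
  by_contra! hne
  obtain ⟨j, hj⟩ := hne
  refine hM c v hc (fun h => hj (congrFun h j)) ?_
  rw [Finset.sum_comm, ← hv]
  simp only [← Algebra.smul_def, Finset.smul_sum, smul_smul, mul_comm (c _) (v _)]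

lemma minors2_le_idealOfVars_sq {S σ : Type*} [CommRing S] {l : ℕ}
    {M : Matrix (Fin 2) (Fin l) (MvPolynomial σ S)} (hM : ∀ i j, (M i j).IsHomogeneous 1) :
    minors2 M ≤ idealOfVars σ S ^ 2 := by
  rw [minors2, Ideal.span_le, pow_two]
  rintro _ ⟨⟨i, j⟩, rfl⟩
  have hentry : ∀ i j, M i j ∈ idealOfVars σ S := fun i j =>
    isHomogeneous_one_mem_idealOfVars (hM i j)
  exact sub_mem (Ideal.mul_mem_mul (hentry _ _) (hentry _ _))
    (Ideal.mul_mem_mul (hentry _ _) (hentry _ _))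

section PrimeIdeals

variable {K : Type*} [Field K] {σ : Type*} {l : ℕ}
  {M : Matrix (Fin 2) (Fin l) (MvPolynomial σ K)}

lemma notMem_span_singleton_sup_minors2 {a p : MvPolynomial σ K} (ha : a.IsHomogeneous 1)
    (hM : ∀ i j, (M i j).IsHomogeneous 1)
    (haM : a ∉ Submodule.span K (⋃ i, Set.range (M i)))
    (hp : p ∈ Submodule.span K (⋃ i, Set.range (M i))) (hp₀ : p ≠ 0) :
    p ∉ Ideal.span {a} ⊔ minors2 M := by
  intro hmem
  have hp1 : p.IsHomogeneous 1 :=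
    isHomogeneous_of_mem_span (Set.iUnion_subset fun i => Set.range_subset_iff.2 (hM i)) hp
  have hpa : p ∈ Submodule.span K {a} :=
    mem_span_of_mem_ideal_span_sup_sq (by simpa using ha) hp1
      (sup_le_sup_left (minors2_le_idealOfVars_sq hM) _ hmem)
  exact hp₀ (Submodule.disjoint_def.1 (Submodule.disjoint_span_singleton_of_notMem haM) p hp hpa)

variable [IsAlgClosed K] [Finite σ] {κ : Type*} [Finite κ] {a : κ → MvPolynomial σ K}

lemma isPrime_map_C_sup_span_pencil (ha : ∀ k, (a k).IsHomogeneous 1)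
    (hM : ∀ i j, (M i j).IsHomogeneous 1)
    (hind : ∀ r : K, LinearIndependent K (Sum.elim a fun j => r • M 0 j + M 1 j)) :
    ((Ideal.span (Set.range a)).map Polynomial.C ⊔ Ideal.span (Set.range (pencil M))).IsPrime := by
  have := Fintype.ofFinite σ
  obtain ⟨α, rfl⟩ : ∃ α : κ → σ → K, (fun k => linearForm K σ (α k)) = a := by
    choose α hα using fun k => exists_linearForm_eq (ha k)
    exact ⟨α, funext hα⟩
  obtain ⟨A, rfl⟩ : ∃ A : Matrix (Fin 2) (Fin l) (σ → K), A.map (linearForm K σ) = M := by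
    choose A hA using fun i j => exists_linearForm_eq (hM i j)
    exact ⟨A, Matrix.ext hA⟩
  let w : κ ⊕ Fin l → σ → Polynomial K :=
    Sum.elim (fun k => Polynomial.C ∘ α k) (coeffPencil A)
  have hw : ∀ r, LinearIndependent K fun k i => (w k i).eval r := by
    intro r
    refine .of_comp (linearForm K σ) ?_
    convert hind r using 1
    funext k
    rcases k with k | j
    · simp [w]
    · simp only [w, Function.comp_apply, Sum.elim_inr, eval_coeffPencil, map_add, map_smul,
        Matrix.map_apply]
  have := isTorsionFree_quotient_span_range hw
  have := isPrime_span_linearForm_image (Submodule.span (Polynomial K) (Set.range w))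
  rw [← map_polynomialSwap_span_linearForm α A, ← span_linearForm_image_span]
  exact Ideal.map_isPrime_of_equiv (polynomialSwap K σ)

lemma isPrime_span_sup_minors2 (ha : ∀ k, (a k).IsHomogeneous 1)
    (hM : ∀ i j, (M i j).IsHomogeneous 1) (ha_ind : LinearIndependent K a)
    (hM_gen : OneGeneric K M)
    (hdisj : Disjoint (Submodule.span K (Set.range a))
      (Submodule.span K (⋃ i, Set.range (M i)))) :
    (Ideal.span (Set.range a) ⊔ minors2 M).IsPrime := by
  have hind : ∀ r s : K, (r ≠ 0 ∨ s ≠ 0) →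
      LinearIndependent K (Sum.elim a fun j => r • M 0 j + s • M 1 j) := by
    intro r s hrs
    have hrow : LinearIndependent K fun j => r • M 0 j + s • M 1 j := by
      have hc : ![r, s] ≠ 0 := by simpa [← not_and_or] using hrs
      simpa using hM_gen.linearIndependent hc
    refine ha_ind.sum_type hrow (hdisj.mono_right (Submodule.span_le.2 ?_))
    rintro _ ⟨j, rfl⟩
    have hentry : ∀ i, M i j ∈ Submodule.span K (⋃ i, Set.range (M i)) :=
      fun i => Submodule.subset_span (Set.mem_iUnion.2 ⟨i, j, rfl⟩)
    exact add_mem (Submodule.smul_mem _ _ (hentry 0)) (Submodule.smul_mem _ _ (hentry 1))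
  have hsyz := hasKoszulSyzygies_mk_of_linearIndependent ha (hM 0)
    (by simpa using hind 1 0 (.inl one_ne_zero))
  rw [← comap_C_sup_span_pencil _ hsyz]
  have := isPrime_map_C_sup_span_pencil ha hM
    fun r => by simpa using hind r 1 (.inr one_ne_zero)
  exact Ideal.comap_isPrime _ _

lemma isPrime_span_singleton_sup_minors2 {a : MvPolynomial σ K} (ha : a.IsHomogeneous 1)
    (hM : ∀ i j, (M i j).IsHomogeneous 1) (hM_gen : OneGeneric K M)
    (haM : a ∉ Submodule.span K (⋃ i, Set.range (M i))) :
    (Ideal.span {a} ⊔ minors2 M).IsPrime := by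
  rw [← Set.range_const (ι := Unit)]
  refine isPrime_span_sup_minors2 (fun _ => ha) hM
    (.of_subsingleton () fun h => haM (h ▸ zero_mem _)) hM_gen ?_
  rw [Set.range_const]
  exact (Submodule.disjoint_span_singleton_of_notMem haM).symm

end PrimeIdeals

lemma iUnion_range_of_cons {R : Type*} {n : ℕ} (x y : R) (u v : Fin n → R) :
    ⋃ i, Set.range ((Matrix.of ![Fin.cons x u, Fin.cons y v] :
      Matrix (Fin 2) (Fin (n + 1)) R) i) = {x, y} ∪ Set.range u ∪ Set.range v := by
  ext p
  rw [Set.mem_iUnion, Fin.exists_fin_two]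
  change p ∈ Set.range (Fin.cons x u : Fin (n + 1) → R) ∨
    p ∈ Set.range (Fin.cons y v : Fin (n + 1) → R) ↔ _
  rw [Fin.range_cons, Fin.range_cons]
  grind

lemma mul_mem_of_mem_minors2 {R : Type u} [CommRing R] {l : ℕ} {M : Matrix (Fin 2) (Fin l) R}
    {I : Ideal R} {x y : R} (hI : ∀ j, x * M 1 j - y * M 0 j ∈ I) {q : R} (hq : q ∈ minors2 M) :
    y * q ∈ I := by
  have hle : minors2 M ≤ I.colon {y} := by
    rw [minors2, Ideal.span_le]
    rintro _ ⟨⟨i, j⟩, rfl⟩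
    have hminor : (M 0 i * M 1 j - M 0 j * M 1 i) * y =
        M 1 i * (x * M 1 j - y * M 0 j) - M 1 j * (x * M 1 i - y * M 0 i) := by ring
    rw [SetLike.mem_coe, Submodule.mem_colon_singleton, smul_eq_mul, hminor]
    exact sub_mem (Ideal.mul_mem_left _ _ (hI j)) (Ideal.mul_mem_left _ _ (hI i))
  simpa [Submodule.mem_colon_singleton, mul_comm] using hle hq

section RepByMinors

variable {R : Type u} [CommRing R] {n : ℕ} {x y : R} {u v : Fin n → R}

lemma repByMinors_le_minors2 :
    repByMinors x y u v ≤ minors2 (.of ![Fin.cons x u, Fin.cons y v]) := by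
  rw [repByMinors, Ideal.span_le]
  rintro _ ⟨j, rfl⟩
  exact Ideal.subset_span ⟨(0, j.succ), by simp [mul_comm]⟩

lemma mul_mem_repByMinors_of_mem_minors2 {q : R}
    (hq : q ∈ minors2 (.of ![Fin.cons x u, Fin.cons y v])) : y * q ∈ repByMinors x y u v := by
  refine mul_mem_of_mem_minors2 (x := x) (Fin.cases ?_ fun j => ?_) hq
  · simp [mul_comm]
  · exact Ideal.subset_span ⟨j, rfl⟩

end RepByMinors

lemma span_mul_sup_eq_inf {R : Type*} [CommRing R] {I J : Ideal R} {a y : R} (hIJ : I ≤ J)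
    (hJI : ∀ q ∈ J, y * q ∈ I)
    (hy : ∀ f, y * f ∈ Ideal.span {a} ⊔ J → f ∈ Ideal.span {a} ⊔ J) :
    Ideal.span {a * y} ⊔ I = (Ideal.span {y} ⊔ I) ⊓ (Ideal.span {a} ⊔ J) := by
  apply le_antisymm
  · refine le_inf (sup_le_sup_right ?_ _) (sup_le_sup ?_ hIJ)
    · exact Ideal.span_singleton_le_span_singleton.2 (dvd_mul_left y a)
    · exact Ideal.span_singleton_le_span_singleton.2 (dvd_mul_right a y)
  · rintro f ⟨hfy, hfa⟩
    obtain ⟨g, q, hq, rfl⟩ := Ideal.mem_span_singleton_sup.1 hfy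
    have hg : y * g ∈ Ideal.span {a} ⊔ J := by
      rw [mul_comm]
      exact (Ideal.add_mem_iff_left _ (Ideal.mem_sup_right (hIJ hq))).1 hfa
    obtain ⟨h, p, hp, rfl⟩ := Ideal.mem_span_singleton_sup.1 (hy g hg)
    have hsplit : (h * a + p) * y + q = h * (a * y) + (y * p + q) := by ring
    rw [hsplit]
    exact Ideal.mem_span_singleton_sup.2 ⟨h, _, add_mem (hJI p hp) hq, rfl⟩

/-- if `I` is generated by quadrics, contained in the linear prime `(x, y)`,
and represented by minors by a 1-generic matrix `D` with first column `(x, y)ᵀ`, and `a`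
is a linear form not in the span of the entries of `D`, then
`(ay) + I = ((y) + I) ∩ ((a) + I₂(D))`. -/
theorem stmt13 (K : Type u) [Field K] [IsAlgClosed K] (N n : ℕ)
    (x y : MvPolynomial (Fin N) K) (hx : x.IsHomogeneous 1) (hy : y.IsHomogeneous 1)
    (hxy : LinearIndependent K ![x, y])
    (hprime : (Ideal.span {x, y}).IsPrime)
    (u v : Fin n → MvPolynomial (Fin N) K)
    (hu : ∀ j, (u j).IsHomogeneous 1) (hv : ∀ j, (v j).IsHomogeneous 1)
    (I : Ideal (MvPolynomial (Fin N) K))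
    (hI : I = repByMinors x y u v)
    (hle : I ≤ Ideal.span {x, y})
    (h1g : OneGeneric K (Matrix.of ![Fin.cons x u, Fin.cons y v] : Matrix (Fin 2) (Fin (n + 1)) (MvPolynomial (Fin N) K)))
    (a : MvPolynomial (Fin N) K) (ha : a.IsHomogeneous 1)
    (hspan : a ∉ Submodule.span K (({x, y} ∪ Set.range u ∪ Set.range v : Set (MvPolynomial (Fin N) K)))) :
    Ideal.span {a * y} ⊔ I =
      (Ideal.span {y} ⊔ I) ⊓
        (Ideal.span {a} ⊔ minors2 (Matrix.of ![Fin.cons x u, Fin.cons y v] : Matrix (Fin 2) (Fin (n + 1)) (MvPolynomial (Fin N) K))) := by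
  set D : Matrix (Fin 2) (Fin (n + 1)) (MvPolynomial (Fin N) K) :=
    Matrix.of ![Fin.cons x u, Fin.cons y v]
  have hD : ∀ i j, (D i j).IsHomogeneous 1 :=
    Fin.forall_fin_two.2 ⟨Fin.cases hx hu, Fin.cases hy hv⟩
  rw [← iUnion_range_of_cons] at hspan
  have hyD : y ∈ Submodule.span K (⋃ i, Set.range (D i)) :=
    Submodule.subset_span (Set.mem_iUnion.2 ⟨1, 0, rfl⟩)
  have hprimeJ : (Ideal.span {a} ⊔ minors2 D).IsPrime :=
    isPrime_span_singleton_sup_minors2 ha hD h1g hspan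
  have hyJ : y ∉ Ideal.span {a} ⊔ minors2 D :=
    notMem_span_singleton_sup_minors2 ha hD hspan hyD (hxy.ne_zero 1)
  rw [hI]
  exact span_mul_sup_eq_inf repByMinors_le_minors2 (fun _ => mul_mem_repByMinors_of_mem_minors2)
    fun _ hf => (hprimeJ.mem_or_mem hf).resolve_left hyJ
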